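/- arXiv:2112.15467 — 2 statements merged into one kernel-verified Lean document; each statement's English description precedes it below -/
import Mathlib

section
/- A finite group all of whose Sylow subgroups are cyclic is metacyclic: it is an extension of a cyclic group by a cyclic group of coprime order. More precisely, such a group G satisfies G = B ⋊ A with B and A cyclic of coprime orders. -/
/-- A finite group all of whose Sylow subgroups are cyclic is a semidirect product
`B ⋊ A` of cyclic subgroups `B`, `A` of coprime orders, with `B` normal. -/
theorem stmt4 {G : Type*} [Group G] [Finite G]
    (h : ∀ (p : ℕ), p.Prime → ∀ P : Sylow p G, IsCyclic P) :
    ∃ B A : Subgroup G, B.Normal ∧ IsCyclic B ∧ IsCyclic A ∧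
      Nat.Coprime (Nat.card B) (Nat.card A) ∧ B ⊓ A = ⊥ ∧ B ⊔ A = ⊤ := by
  have hG : IsZGroup G := ⟨h⟩
  obtain ⟨H, hH⟩ := Subgroup.exists_right_complement'_of_coprime hG.coprime_commutator_index
  refine ⟨commutator G, H, inferInstance, hG.isCyclic_commutator, ?_, ?_,
    hH.disjoint.eq_bot, hH.sup_eq_top⟩
  · have h1 : Abelianization G ≃* H := hH.symm.QuotientMulEquiv
    exact isCyclic_of_surjective _ h1.surjective
  · rw [← hH.symm.index_eq_card]
    exact hG.coprime_commutator_index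
end

section
/- Let G be a finite group in which every abelian subgroup is cyclic, no element has order 4, and every element has prime power order. Then G ≅ C_P ⋊ C_Q where P and Q are coprime, each equal to 1, 2, or an odd prime power, and C_Q acts faithfully on C_P. -/
universe u

/-- In a group of class two, the `n`-th power of a product. -/
theorem aux_pow {G : Type*} [Group G] (x y c : G) (hc : ∀ g : G, Commute c g)
    (hyx : y * x = c * (x * y)) (n : ℕ) :
    y ^ n * x = c ^ n * (x * y ^ n) ∧ (x * y) ^ n = c ^ (n.choose 2) * (x ^ n * y ^ n) := by
  induction n with
  | zero => simp
  | succ n ih =>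
    obtain ⟨h1, h2⟩ := ih
    have hcn : ∀ (k : ℕ) (g : G), g * c ^ k = c ^ k * g := fun k g => ((hc g).pow_left k).eq.symm
    constructor
    · calc y ^ (n + 1) * x = y * (y ^ n * x) := by rw [pow_succ']; group
        _ = (y * c ^ n) * (x * y ^ n) := by rw [h1]; group
        _ = c ^ n * (y * x) * y ^ n := by rw [hcn]; group
        _ = c ^ (n + 1) * (x * y ^ (n + 1)) := by rw [hyx, pow_succ, pow_succ' y]; group
    · calc (x * y) ^ (n + 1) = c ^ (n.choose 2) * (x ^ n * (y ^ n * x) * y) := by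
            rw [pow_succ, h2]; simp only [mul_assoc]
        _ = c ^ (n.choose 2) * ((x ^ n * c ^ n) * (x * y ^ n) * y) := by
            rw [h1]; simp only [mul_assoc]
        _ = c ^ (n.choose 2) * c ^ n * (x ^ n * x * (y ^ n * y)) := by
            rw [hcn]; simp only [mul_assoc]
        _ = _ := by
            rw [← pow_add, ← pow_succ, ← pow_succ, Nat.choose_succ_succ' n 1, Nat.choose_one_right,
              add_comm (n.choose 2) n]

/-- Proper subgroups of a finite `p`-group lie in a subgroup of index `p`. -/
theorem aux_index {G : Type*} [Group G] [Finite G] {p : ℕ} [Fact p.Prime] (hG : IsPGroup p G)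
    (H : Subgroup G) (hH : H ≠ ⊤) : ∃ M : Subgroup G, H ≤ M ∧ M.index = p := by
  have hp : p.Prime := Fact.out
  obtain ⟨m, hm⟩ := IsPGroup.iff_card.1 hG
  obtain ⟨n, hn⟩ := IsPGroup.iff_card.1 (hG.to_subgroup H)
  have hlt : n < m := by
    by_contra h
    apply hH
    apply Subgroup.eq_top_of_le_card
    rw [hm, hn]
    exact Nat.pow_le_pow_right hp.pos (by omega)
  obtain ⟨k, rfl⟩ : ∃ k, m = k + 1 := ⟨m - 1, by omega⟩
  obtain ⟨M, hM, hHM⟩ := Sylow.exists_subgroup_card_pow_prime_le (m := k) p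
    (by rw [hm]; exact pow_dvd_pow _ (by omega)) H hn (by omega)
  refine ⟨M, hHM, ?_⟩
  have := M.card_mul_index
  rw [hM, hm, pow_succ] at this
  exact Nat.eq_of_mul_eq_mul_left (pow_pos hp.pos k) this

theorem aux_normal {G : Type*} [Group G] [Finite G] {p : ℕ} [Fact p.Prime] (hG : IsPGroup p G)
    (M : Subgroup G) (hM : M.index = p) :
    M.Normal ∧ commutator G ≤ M ∧ ∀ g : G, g ^ p ∈ M := by
  have hp : p.Prime := Fact.out
  obtain ⟨m, hm⟩ := IsPGroup.iff_card.1 hG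
  have hm0 : m ≠ 0 := by
    rintro rfl
    have := M.index_dvd_card
    rw [hm, hM, pow_zero, Nat.dvd_one] at this
    exact hp.one_lt.ne' this
  have hN : M.Normal := by
    apply Subgroup.normal_of_index_eq_minFac_card
    rw [hM, hm, hp.pow_minFac hm0]
  refine ⟨hN, ?_, fun g => hM ▸ M.pow_index_mem g⟩
  rw [← Subgroup.Normal.quotient_commutative_iff_commutator_le]
  have : IsCyclic (G ⧸ M) := isCyclic_of_prime_card (p := p) (by rw [← Subgroup.index_eq_card, hM])
  exact IsCyclic.isMulCommutative

theorem aux_odd {p : ℕ} [Fact p.Prime] (hp2 : p ≠ 2) (n : ℕ) :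
    ∀ (G : Type u) [Group G] [Finite G], Nat.card G = n → IsPGroup p G →
    (∀ H : Subgroup G, (∀ a b : H, a * b = b * a) → IsCyclic H) → IsCyclic G := by
  have hp : p.Prime := Fact.out
  induction n using Nat.strong_induction_on with
  | _ n ih =>
  intro G _ _ hn hG hab
  by_contra hcyc
  -- proper subgroups are commutative
  have hcomm : ∀ M : Subgroup G, M.index = p → ∀ a ∈ M, ∀ b ∈ M, a * b = b * a := by
    intro M hM a ha b hb
    have hlt : Nat.card M < n := by
      rw [← hn, ← M.card_mul_index, hM]
      exact lt_mul_of_one_lt_right Nat.card_pos hp.one_lt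
    have : IsCyclic M := by
      refine ih _ hlt M rfl (hG.to_subgroup M) ?_
      intro H hH
      have e := H.equivMapOfInjective M.subtype M.subtype_injective
      have := hab (H.map M.subtype) (by
        intro a b
        obtain ⟨a, rfl⟩ := e.surjective a
        obtain ⟨b, rfl⟩ := e.surjective b
        rw [← map_mul, hH, map_mul])
      exact isCyclic_of_surjective e.symm e.symm.surjective
    have h := (IsCyclic.isMulCommutative (α := M)).is_comm.comm ⟨a, ha⟩ ⟨b, hb⟩
    exact congrArg Subtype.val h
  have htop : ∀ x : G, Subgroup.zpowers x ≠ ⊤ := by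
    intro x hx
    exact hcyc ⟨x, fun y => (hx ▸ Subgroup.mem_top y : y ∈ Subgroup.zpowers x)⟩
  obtain ⟨M, -, hM⟩ := aux_index hG _ (htop 1)
  have hMtop : M ≠ ⊤ := by
    rintro rfl
    rw [Subgroup.index_top] at hM
    exact hp.one_lt.ne hM
  obtain ⟨x, hx⟩ : ∃ x, x ∉ M := by
    by_contra! h
    exact hMtop ((Subgroup.eq_top_iff' M).2 h)
  obtain ⟨L, hxL, hL⟩ := aux_index hG _ (htop x)
  have hxL : x ∈ L := hxL (Subgroup.mem_zpowers x)
  obtain ⟨hMn, hMc, hMp⟩ := aux_normal hG M hM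
  obtain ⟨hLn, hLc, hLp⟩ := aux_normal hG L hL
  have hsup : ∀ C : Subgroup G, M ≤ C → x ∈ C → C = ⊤ := by
    intro C hMC hxC
    have h1 := Subgroup.relIndex_mul_index hMC
    rw [hM] at h1
    rcases (Nat.dvd_prime hp).1 (Dvd.intro_left _ h1) with h | h
    · exact Subgroup.index_eq_one.1 h
    · rw [h] at h1
      have : M.relIndex C = 1 := by
        have := hp.pos
        nlinarith
      exact absurd (Subgroup.relIndex_eq_one.1 this hxC) hx
  have hK : ∀ c ∈ M ⊓ L, ∀ g : G, Commute c g := by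
    intro c hc g
    have : Subgroup.centralizer {c} = ⊤ := by
      apply hsup
      · intro m hm
        rw [Subgroup.mem_centralizer_singleton_iff]
        exact hcomm M hM _ hm _ hc.1
      · rw [Subgroup.mem_centralizer_singleton_iff]
        exact hcomm L hL _ hxL _ hc.2
    have hg : g ∈ Subgroup.centralizer {c} := by rw [this]; trivial
    rw [Subgroup.mem_centralizer_singleton_iff] at hg
    exact hg.symm
  have hKp : ∀ g : G, g ^ p ∈ M ⊓ L := fun g => ⟨hMp g, hLp g⟩
  have hmul : ∀ a b : G, (a * b) ^ p = a ^ p * b ^ p := by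
    intro a b
    obtain ⟨c, hcdef⟩ : ∃ c, c = b * a * b⁻¹ * a⁻¹ := ⟨_, rfl⟩
    have hcm : c ∈ commutator G := by
      rw [hcdef]
      exact Subgroup.commutator_mem_commutator (Subgroup.mem_top b) (Subgroup.mem_top a)
    have hc := hK c ⟨hMc hcm, hLc hcm⟩
    have hba : b * a = c * (a * b) := by rw [hcdef]; group
    obtain ⟨h1, h2⟩ := aux_pow a b c hc hba p
    rw [(hK _ (hKp b) a).eq] at h1
    have hcp : c ^ p = 1 := by
      have := h1.symm
      rwa [mul_eq_right] at this
    have hdvd : p ∣ p.choose 2 :=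
      hp.dvd_choose_self (by norm_num) (lt_of_le_of_ne hp.two_le hp2.symm)
    obtain ⟨t, ht⟩ := hdvd
    rw [h2, ht, pow_mul, hcp, one_pow, one_mul]
  let f : G →* G := MonoidHom.mk' (fun g => g ^ p) hmul
  have hrange : f.range ≤ M ⊓ L := by
    rintro _ ⟨g, rfl⟩
    exact hKp g
  have hidx : p ^ 2 ∣ (M ⊓ L).index := by
    obtain ⟨k, hk⟩ := hG.index (M ⊓ L)
    rw [hk]
    apply pow_dvd_pow
    by_contra hlt
    have h1 := Subgroup.relIndex_mul_index (inf_le_right : M ⊓ L ≤ L)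
    have hle : p ^ k ≤ p ^ 1 := Nat.pow_le_pow_right hp.pos (by omega)
    have hne : (M ⊓ L).relIndex L ≠ 1 := by
      intro h
      exact hx (Subgroup.relIndex_eq_one.1 h hxL).1
    have hne0 : (M ⊓ L).relIndex L ≠ 0 := by
      intro h
      rw [h, zero_mul, hk] at h1
      exact (pow_pos hp.pos k).ne h1
    rw [hL, hk] at h1
    have h2 : 2 ≤ (M ⊓ L).relIndex L := by omega
    have := hp.pos
    nlinarith
  have hker : p ^ 2 ∣ Nat.card f.ker := by
    have h1 := f.ker.card_mul_index
    rw [Subgroup.index_ker] at h1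
    have h2 := (M ⊓ L).card_mul_index
    obtain ⟨t, ht⟩ := hidx
    obtain ⟨m, hm⟩ := Subgroup.card_dvd_of_le hrange
    rw [← h2, hm, ht] at h1
    have hpos : 0 < Nat.card f.range := Nat.card_pos
    refine ⟨m * t, Nat.eq_of_mul_eq_mul_left hpos ?_⟩
    rw [mul_comm, h1]; ring
  obtain ⟨E, hE⟩ := Sylow.exists_subgroup_card_pow_prime p hker
  have hEc := IsPGroup.isMulCommutative_of_card_eq_prime_sq hE
  have e := E.equivMapOfInjective f.ker.subtype f.ker.subtype_injective
  have hcycE := hab (E.map f.ker.subtype) (by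
    intro a b
    obtain ⟨a, rfl⟩ := e.surjective a
    obtain ⟨b, rfl⟩ := e.surjective b
    rw [← map_mul, hEc.is_comm.comm, map_mul])
  obtain ⟨g, hg⟩ := hcycE.exists_ofOrder_eq_natCard
  rw [← Nat.card_congr e.toEquiv, hE] at hg
  have hgp : g ^ p = 1 := by
    obtain ⟨g, k, hk, rfl⟩ := g
    apply Subtype.ext
    exact k.2
  have h1 := orderOf_dvd_of_pow_eq_one hgp
  rw [hg] at h1
  have := Nat.le_of_dvd hp.pos h1
  have := hp.one_lt
  nlinarith

theorem aux_order {G : Type*} [Group G] [Finite G]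
    (h4 : ∀ g : G, orderOf g ≠ 4)
    (hpp : ∀ g : G, g ≠ 1 → IsPrimePow (orderOf g)) (g : G) :
    orderOf g = 1 ∨ orderOf g = 2 ∨ (IsPrimePow (orderOf g) ∧ Odd (orderOf g)) := by
  by_cases h1 : g = 1
  · left; simp [h1]
  right
  have h := hpp g h1
  rcases Nat.even_or_odd (orderOf g) with he | ho
  · left
    obtain ⟨q, k, hq, hk, hqk⟩ := h
    have hq : q.Prime := hq.nat_prime
    have h2 : q = 2 := by
      have h2 : 2 ∣ q ^ k := by rw [hqk]; exact he.two_dvd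
      exact ((Nat.prime_dvd_prime_iff_eq Nat.prime_two hq).1
        (Nat.prime_two.dvd_of_dvd_pow h2)).symm
    subst h2
    by_contra hne
    have hk2 : 2 ≤ k := by
      by_contra hlt
      have : k = 1 := by omega
      subst this
      exact hne (by rw [← hqk]; norm_num)
    obtain ⟨j, rfl⟩ : ∃ j, k = j + 2 := ⟨k - 2, by omega⟩
    apply h4 (g ^ (2 ^ j))
    rw [orderOf_pow_of_dvd (by positivity) (by rw [← hqk]; exact pow_dvd_pow _ (by omega)), ← hqk,
      pow_add, Nat.mul_div_cancel_left _ (by positivity)]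
    norm_num
  · exact Or.inr ⟨h, ho⟩

theorem aux_cop {a b : ℕ} (hab : Nat.Coprime a b) (ha : a ≠ 1) (hb : b ≠ 1) :
    ¬ IsPrimePow (a * b) := by
  intro h
  have h0 := h.ne_zero
  rcases (hab.isPrimePow_dvd_mul h).1 dvd_rfl with h' | h'
  · have := Nat.le_of_dvd (Nat.pos_of_ne_zero (left_ne_zero_of_mul h0)) h'
    have h1 := Nat.pos_of_ne_zero (left_ne_zero_of_mul h0)
    have h2 := Nat.pos_of_ne_zero (right_ne_zero_of_mul h0)
    have : 2 ≤ b := by omega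
    nlinarith
  · have := Nat.le_of_dvd (Nat.pos_of_ne_zero (right_ne_zero_of_mul h0)) h'
    have h1 := Nat.pos_of_ne_zero (left_ne_zero_of_mul h0)
    have h2 := Nat.pos_of_ne_zero (right_ne_zero_of_mul h0)
    have : 2 ≤ a := by omega
    nlinarith


/-- Let `G` be a finite group in which every abelian subgroup is cyclic, no element has
order `4`, and every element has prime power order. Then `G = A ⋊ B` with `A`, `B`
cyclic of coprime orders, each order being `1`, `2`, or an odd prime power, and with
`B` acting faithfully on `A` by conjugation. -/
theorem stmt19 {G : Type*} [Group G] [Finite G]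
    (hab : ∀ H : Subgroup G, (∀ a b : H, a * b = b * a) → IsCyclic H)
    (h4 : ∀ g : G, orderOf g ≠ 4)
    (hpp : ∀ g : G, g ≠ 1 → IsPrimePow (orderOf g)) :
    ∃ A B : Subgroup G, A.Normal ∧ IsCyclic A ∧ IsCyclic B ∧
      A ⊓ B = ⊥ ∧ A ⊔ B = ⊤ ∧
      Nat.Coprime (Nat.card A) (Nat.card B) ∧
      (Nat.card A = 1 ∨ Nat.card A = 2 ∨ (IsPrimePow (Nat.card A) ∧ Odd (Nat.card A))) ∧
      (Nat.card B = 1 ∨ Nat.card B = 2 ∨ (IsPrimePow (Nat.card B) ∧ Odd (Nat.card B))) ∧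
      (∀ b ∈ B, (∀ a ∈ A, b * a * b⁻¹ = a) → b = 1) := by
  have hZ : IsZGroup G := by
    refine ⟨fun p hp P => ?_⟩
    have := Fact.mk hp
    have habP : ∀ H : Subgroup P, (∀ a b : H, a * b = b * a) → IsCyclic H := by
      intro H hH
      have e := H.equivMapOfInjective P.1.subtype P.1.subtype_injective
      have := hab (H.map P.1.subtype) (by
        intro a b
        obtain ⟨a, rfl⟩ := e.surjective a
        obtain ⟨b, rfl⟩ := e.surjective b
        rw [← map_mul, hH, map_mul])
      exact isCyclic_of_surjective e.symm e.symm.surjective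
    by_cases hp2 : p = 2
    · subst hp2
      have hsq : ∀ g : P, g * g = 1 := by
        intro g
        obtain ⟨k, hk⟩ := IsPGroup.iff_orderOf.1 P.2 g
        have hk' : orderOf (g : G) = 2 ^ k := by rw [← hk]; exact Subgroup.orderOf_coe g
        have : orderOf g ∣ 2 := by
          rw [hk, ← hk']
          rcases aux_order h4 hpp (g : G) with h | h | ⟨h, ho⟩
          · rw [h]; norm_num
          · rw [h]
          · rw [hk'] at ho ⊢
            rcases k with _ | k
            · norm_num
            · exact absurd ho (by simp [pow_succ])
        rw [← sq]
        exact orderOf_dvd_iff_pow_eq_one.1 this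
      refine hab P.1 fun a b => ?_
      have hi : ∀ g : P, g⁻¹ = g := fun g => inv_eq_of_mul_eq_one_left (hsq g)
      calc a * b = (a * b)⁻¹ := (hi _).symm
        _ = b * a := by rw [mul_inv_rev, hi, hi]
    · exact aux_odd hp2 _ P rfl P.2 habP
  have hcard : ∀ H : Subgroup G, IsCyclic H → ∃ g : G, g ∈ H ∧ orderOf g = Nat.card H := by
    intro H hH
    obtain ⟨g, hg⟩ := hH.exists_ofOrder_eq_natCard
    exact ⟨g, g.2, by rw [← hg]; exact Subgroup.orderOf_coe g⟩
  have hcard' : ∀ H : Subgroup G, IsCyclic H →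
      (Nat.card H = 1 ∨ Nat.card H = 2 ∨ (IsPrimePow (Nat.card H) ∧ Odd (Nat.card H))) := by
    intro H hH
    obtain ⟨g, -, hg⟩ := hcard H hH
    rw [← hg]
    exact aux_order h4 hpp g
  obtain ⟨B, hB⟩ := Subgroup.exists_right_complement'_of_coprime hZ.coprime_commutator_index
  have h1 : Abelianization G ≃* B := hB.symm.QuotientMulEquiv
  have hBc : IsCyclic B := isCyclic_of_surjective _ h1.surjective
  have hAc : IsCyclic (commutator G) := hZ.isCyclic_commutator
  have hcop : (Nat.card (commutator G)).Coprime (Nat.card B) :=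
    Nat.card_congr h1.toEquiv ▸ hZ.coprime_commutator_index
  by_cases hA1 : Nat.card (commutator G) = 1
  · have hbot : commutator G = ⊥ := Subgroup.card_eq_one.1 hA1
    have hBt : B = ⊤ := by
      have := hB.sup_eq_top
      rwa [hbot, bot_sup_eq] at this
    rw [hBt] at hBc
    refine ⟨⊤, ⊥, inferInstance, hBc, inferInstance, by simp, by simp, by simp, hcard' _ hBc,
      by simp, fun b hb _ => by simpa using hb⟩
  · refine ⟨commutator G, B, inferInstance, hAc, hBc, hB.disjoint.eq_bot, hB.sup_eq_top, hcop,
      hcard' _ hAc, hcard' _ hBc, ?_⟩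
    intro b hb hba
    by_contra hb1
    obtain ⟨a, ha, hoa⟩ := hcard _ hAc
    have hc : Commute a b := by
      have := hba a ha
      exact (mul_inv_eq_iff_eq_mul.1 this).symm
    have hco : (orderOf a).Coprime (orderOf b) := by
      rw [hoa]
      exact hcop.coprime_dvd_right (Subgroup.orderOf_dvd_natCard B hb)
    have ho := hc.orderOf_mul_eq_mul_orderOf_of_coprime hco
    have hob : orderOf b ≠ 1 := by rwa [Ne, orderOf_eq_one_iff]
    have hoa1 : orderOf a ≠ 1 := by rwa [hoa]
    apply aux_cop hco hoa1 hob
    rw [← ho]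
    apply hpp
    intro h
    rw [h, orderOf_one] at ho
    exact hoa1 (Nat.eq_one_of_mul_eq_one_right ho.symm)
end
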